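/- Fix a ∈ {2,…,K}. (i) For every N_1 > 0, the map N_a ↦ W_a(N_1, N_a) is strictly increasing on [0,∞), equals 0 at N_a = 0, converges to N_1·d(μ_1, μ_a) as N_a → ∞, and is differentiable with derivative equal to d(μ_a, x_{1,a}(N_1,N_a)) at every N_a. (ii) Consequently, for every I > 0 and every N_1 > I/d(μ_1, μ_a) there is a unique N_a(N_1) > 0 with W_a(N_1, N_a(N_1)) = I; the map N_1 ↦ N_a(N_1) is strictly decreasing on (I/d(μ_1,μ_a), ∞) and converges to I/d(μ_a, μ_1) as N_1 → ∞. -/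

import Mathlib

open scoped BigOperators

/-- A single-parameter exponential family, given by the log-partition function `b`,
smooth with positive second derivative on an open interval `Θ`, together with the
inverse `θof` of `b'` on the set of means `S = b'(Θ)`. -/
structure SPEF where
  Θ : Set ℝ
  Θ_isOpen : IsOpen Θ
  Θ_ordConnected : Set.OrdConnected Θ
  Θ_nonempty : Θ.Nonempty
  b : ℝ → ℝ
  b_smooth : ContDiffOn ℝ (⊤ : ℕ∞) b Θ
  b_conv : ∀ t ∈ Θ, 0 < iteratedDeriv 2 b t
  θof : ℝ → ℝ
  θof_mem : ∀ μ ∈ deriv b '' Θ, θof μ ∈ Θ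
  θof_spec : ∀ μ ∈ deriv b '' Θ, deriv b (θof μ) = μ

namespace SPEF

/-- The set of means of the family. -/
def S (F : SPEF) : Set ℝ := deriv F.b '' F.Θ

/-- KL divergence `d(μ, x)` between the members of the family with means `μ` and `x`. -/
noncomputable def d (F : SPEF) (μ x : ℝ) : ℝ :=
  (F.θof μ - F.θof x) * μ - F.b (F.θof μ) + F.b (F.θof x)

end SPEF

/-- A `K`-armed bandit instance with arm distributions in a fixed SPEF; arm `0`
(the paper's arm `1`) is the unique best arm. -/
structure Bandit (K : ℕ) [NeZero K] extends SPEF where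
  two_le : 2 ≤ K
  μ : Fin K → ℝ
  μ_mem : ∀ a, μ a ∈ SPEF.S toSPEF
  μ_best : ∀ a : Fin K, a ≠ 0 → μ a < μ 0

namespace Bandit

variable {K : ℕ} [NeZero K]

/-- KL divergence of the underlying family. -/
noncomputable def d (M : Bandit K) : ℝ → ℝ → ℝ := M.toSPEF.d

/-- The weighted mean `x_{1,a}(N₁, N_a)`. -/
noncomputable def x1 (M : Bandit K) (a : Fin K) (N1 Na : ℝ) : ℝ :=
  (N1 * M.μ 0 + Na * M.μ a) / (N1 + Na)

/-- The index `W_a(N₁, N_a)` of an arm `a ≠ 1`. -/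
noncomputable def W (M : Bandit K) (a : Fin K) (N1 Na : ℝ) : ℝ :=
  N1 * M.d (M.μ 0) (M.x1 a N1 Na) + Na * M.d (M.μ a) (M.x1 a N1 Na)

/-- The set `{2, …, K}` of suboptimal arms. -/
def alt (K : ℕ) [NeZero K] : Finset (Fin K) := Finset.univ.filter (fun a => a ≠ 0)

/-- The anchor function `g(μ, N)`. -/
noncomputable def g (M : Bandit K) (Nv : Fin K → ℝ) : ℝ :=
  (∑ a ∈ alt K, M.d (M.μ 0) (M.x1 a (Nv 0) (Nv a)) / M.d (M.μ a) (M.x1 a (Nv 0) (Nv a))) - 1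

end Bandit

open Bandit

namespace SPEF

variable (F : SPEF)

lemma hasDerivAt_b {t : ℝ} (ht : t ∈ F.Θ) : HasDerivAt F.b (deriv F.b t) t :=
  ((F.b_smooth.contDiffAt (F.Θ_isOpen.mem_nhds ht)).differentiableAt (by simp)).hasDerivAt

lemma hasDerivAt_deriv_b {t : ℝ} (ht : t ∈ F.Θ) :
    HasDerivAt (deriv F.b) (iteratedDeriv 2 F.b t) t := by
  have h : ContDiffOn ℝ 1 (deriv F.b) F.Θ :=
    F.b_smooth.deriv_of_isOpen F.Θ_isOpen (WithTop.coe_le_coe.2 (le_top : (1 + 1 : ℕ∞) ≤ ⊤))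
  have h' := ((h.contDiffAt (F.Θ_isOpen.mem_nhds ht)).differentiableAt (by simp)).hasDerivAt
  rwa [show iteratedDeriv 2 F.b t = deriv (deriv F.b) t by
    rw [iteratedDeriv_succ, iteratedDeriv_one]]

lemma convex_Θ : Convex ℝ F.Θ := F.Θ_ordConnected.convex

lemma continuousOn_deriv_b : ContinuousOn (deriv F.b) F.Θ :=
  fun _ ht => (F.hasDerivAt_deriv_b ht).continuousAt.continuousWithinAt

lemma strictMonoOn_deriv_b : StrictMonoOn (deriv F.b) F.Θ := by
  refine strictMonoOn_of_deriv_pos F.convex_Θ F.continuousOn_deriv_b fun t ht => ?_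
  have ht' := interior_subset ht
  rw [(F.hasDerivAt_deriv_b ht').deriv]
  exact F.b_conv t ht'

lemma strictConvexOn_b : StrictConvexOn ℝ F.Θ F.b :=
  StrictMonoOn.strictConvexOn_of_deriv F.convex_Θ
    (fun _ ht => (F.hasDerivAt_b ht).continuousAt.continuousWithinAt)
    (F.strictMonoOn_deriv_b.mono interior_subset)

lemma θof_deriv_b {t : ℝ} (ht : t ∈ F.Θ) : F.θof (deriv F.b t) = t :=
  F.strictMonoOn_deriv_b.injOn (F.θof_mem _ ⟨t, ht, rfl⟩) ht (F.θof_spec _ ⟨t, ht, rfl⟩)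

lemma strictMonoOn_θof : StrictMonoOn F.θof F.S := by
  intro x hx y hy hxy
  rw [← F.strictMonoOn_deriv_b.lt_iff_lt (F.θof_mem x hx) (F.θof_mem y hy),
    F.θof_spec x hx, F.θof_spec y hy]
  exact hxy

lemma convex_S : Convex ℝ F.S :=
  ((F.convex_Θ.isPreconnected.image _ F.continuousOn_deriv_b).ordConnected).convex

lemma image_θof_S : F.θof '' F.S = F.Θ := by
  refine Set.Subset.antisymm (Set.image_subset_iff.2 F.θof_mem) fun t ht => ?_
  exact ⟨deriv F.b t, ⟨t, ht, rfl⟩, F.θof_deriv_b ht⟩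

lemma S_mem_nhds {x : ℝ} (hx : x ∈ F.S) : F.S ∈ nhds x := by
  obtain ⟨t, ht, rfl⟩ := hx
  obtain ⟨l, u, ⟨hl, hu⟩, hlu⟩ := mem_nhds_iff_exists_Ioo_subset.1 (F.Θ_isOpen.mem_nhds ht)
  obtain ⟨r, hlr, hrt⟩ := exists_between hl
  obtain ⟨s, hts, hsu⟩ := exists_between hu
  have hr : r ∈ F.Θ := hlu ⟨hlr, hrt.trans hu⟩
  have hs : s ∈ F.Θ := hlu ⟨hl.trans hts, hsu⟩
  exact Filter.mem_of_superset
    (Icc_mem_nhds (F.strictMonoOn_deriv_b hr ht hrt) (F.strictMonoOn_deriv_b ht hs hts))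
    (F.convex_S.ordConnected.out ⟨r, hr, rfl⟩ ⟨s, hs, rfl⟩)

lemma hasDerivAt_θof {x : ℝ} (hx : x ∈ F.S) :
    HasDerivAt F.θof (iteratedDeriv 2 F.b (F.θof x))⁻¹ x := by
  have hθ := F.θof_mem x hx
  have hcont : ContinuousAt F.θof x :=
    F.strictMonoOn_θof.continuousAt_of_image_mem_nhds (F.S_mem_nhds hx)
      (by rw [image_θof_S]; exact F.Θ_isOpen.mem_nhds hθ)
  refine (F.hasDerivAt_deriv_b hθ).of_local_left_inverse hcont (F.b_conv _ hθ).ne' ?_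
  filter_upwards [F.S_mem_nhds hx] with y hy using F.θof_spec y hy

lemma hasDerivAt_d (m : ℝ) {x : ℝ} (hx : x ∈ F.S) :
    HasDerivAt (F.d m) ((iteratedDeriv 2 F.b (F.θof x))⁻¹ * (x - m)) x := by
  have hθ := F.hasDerivAt_θof hx
  have hb := (F.hasDerivAt_b (F.θof_mem x hx)).comp x hθ
  rw [F.θof_spec x hx] at hb
  refine ((((hθ.const_sub (F.θof m)).mul_const m).sub_const (F.b (F.θof m))).add hb).congr_deriv ?_
  ring

@[simp]
lemma d_self (x : ℝ) : F.d x x = 0 := by simp [d]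

lemma d_pos {m x : ℝ} (hm : m ∈ F.S) (hx : x ∈ F.S) (hne : m ≠ x) : 0 < F.d m x := by
  have hm' := F.θof_mem m hm
  have hx' := F.θof_mem x hx
  have hd := F.hasDerivAt_b hm'
  rw [F.θof_spec m hm] at hd
  rcases hne.lt_or_gt with h | h
  · have hlt := F.strictMonoOn_θof hm hx h
    have := F.strictConvexOn_b.lt_slope_of_hasDerivAt hm' hx' hlt hd
    rw [slope_def_field, lt_div_iff₀ (sub_pos.2 hlt)] at this
    unfold d; linarith
  · have hlt := F.strictMonoOn_θof hx hm h
    have := F.strictConvexOn_b.slope_lt_of_hasDerivAt hx' hm' hlt hd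
    rw [slope_def_field, div_lt_iff₀ (sub_pos.2 hlt)] at this
    unfold d; linarith

lemma d_nonneg {m x : ℝ} (hm : m ∈ F.S) (hx : x ∈ F.S) : 0 ≤ F.d m x := by
  rcases eq_or_ne m x with rfl | h
  · simp
  · exact (F.d_pos hm hx h).le

/-- The weighted mean of `m` and `n` with weights `p` and `q`. -/
noncomputable def mix (m n p q : ℝ) : ℝ := (p * m + q * n) / (p + q)

/-- The transportation cost `p d(m, x) + q d(n, x)` at the weighted mean `x` of `m` and `n`. -/
noncomputable def cost (m n p q : ℝ) : ℝ :=
  p * F.d m (mix m n p q) + q * F.d n (mix m n p q)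

lemma mix_comm (m n p q : ℝ) : mix m n p q = mix n m q p := by
  rw [mix, mix, add_comm (p * m), add_comm p]

lemma cost_comm (m n p q : ℝ) : F.cost m n p q = F.cost n m q p := by
  rw [cost, cost, mix_comm m n p q, add_comm]

lemma mix_mul {m n p q : ℝ} (h : 0 < p + q) : (p + q) * mix m n p q = p * m + q * n :=
  mul_div_cancel₀ _ h.ne'

lemma mix_ne_right {m n p q : ℝ} (hmn : m ≠ n) (hp : 0 < p) (hq : 0 ≤ q) :
    mix m n p q ≠ n := by
  intro h
  have := mix_mul (m := m) (n := n) (add_pos_of_pos_of_nonneg hp hq)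
  rw [h] at this
  exact hmn (mul_left_cancel₀ hp.ne' (by linarith))

lemma mix_mem {m n p q : ℝ} (hm : m ∈ F.S) (hn : n ∈ F.S) (hp : 0 < p) (hq : 0 ≤ q) :
    mix m n p q ∈ F.S := by
  have h : 0 < p + q := by linarith
  have := F.convex_S hm hn (div_nonneg hp.le h.le) (div_nonneg hq h.le)
    (by rw [← add_div, div_self h.ne'])
  convert this using 1
  simp only [mix, smul_eq_mul]
  ring

lemma tendsto_mix_right (m n p : ℝ) :
    Filter.Tendsto (mix m n p) Filter.atTop (nhds n) := by
  have h : Filter.Tendsto (fun q : ℝ => n + p * (m - n) / (p + q)) Filter.atTop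
      (nhds (n + 0)) :=
    tendsto_const_nhds.add
      (tendsto_const_nhds.div_atTop (Filter.tendsto_atTop_add_const_left _ p Filter.tendsto_id))
  rw [add_zero] at h
  refine h.congr' ?_
  filter_upwards [Filter.eventually_gt_atTop (-p)] with q hq
  have : p + q ≠ 0 := by linarith
  rw [mix]
  field_simp
  ring

lemma mul_d_add_mul_d {m n p q : ℝ} (h : 0 < p + q) (y : ℝ) :
    p * F.d m y + q * F.d n y = F.cost m n p q + (p + q) * F.d (mix m n p q) y := by
  simp only [cost, d]
  linear_combination (F.θof y - F.θof (mix m n p q)) * mix_mul (m := m) (n := n) h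

lemma cost_le {m n p q y : ℝ} (hm : m ∈ F.S) (hn : n ∈ F.S) (hp : 0 < p) (hq : 0 ≤ q)
    (hy : y ∈ F.S) : F.cost m n p q ≤ p * F.d m y + q * F.d n y := by
  have h : 0 < p + q := by linarith
  rw [F.mul_d_add_mul_d h]
  exact le_add_of_nonneg_right (mul_nonneg h.le (F.d_nonneg (F.mix_mem hm hn hp hq) hy))

lemma cost_zero_right {m n p : ℝ} (hp : 0 < p) : F.cost m n p 0 = 0 := by
  simp [cost, mix, hp.ne']

lemma strictMonoOn_cost {m n p : ℝ} (hm : m ∈ F.S) (hn : n ∈ F.S) (hmn : m ≠ n) (hp : 0 < p) :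
    StrictMonoOn (F.cost m n p) (Set.Ici 0) := by
  intro q hq r hr hqr
  have hx := F.mix_mem hm hn hp hr
  have hpos := F.d_pos hn hx (mix_ne_right hmn hp hr).symm
  calc F.cost m n p q ≤ p * F.d m (mix m n p r) + q * F.d n (mix m n p r) :=
        F.cost_le hm hn hp hq hx
    _ < F.cost m n p r := by rw [cost]; gcongr

lemma cost_le_mul_d {m n p q : ℝ} (hm : m ∈ F.S) (hn : n ∈ F.S) (hp : 0 < p) (hq : 0 ≤ q) :
    F.cost m n p q ≤ p * F.d m n := by
  simpa using F.cost_le hm hn hp hq hn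

lemma tendsto_cost {m n p : ℝ} (hm : m ∈ F.S) (hn : n ∈ F.S) (hp : 0 < p) :
    Filter.Tendsto (F.cost m n p) Filter.atTop (nhds (p * F.d m n)) := by
  have hlow : Filter.Tendsto (fun q => p * F.d m (mix m n p q)) Filter.atTop
      (nhds (p * F.d m n)) :=
    ((F.hasDerivAt_d m hn).continuousAt.tendsto.comp (tendsto_mix_right m n p)).const_mul p
  refine tendsto_of_tendsto_of_tendsto_of_le_of_le' hlow tendsto_const_nhds ?_ ?_
  · filter_upwards [Filter.eventually_ge_atTop 0] with q hq
    exact le_add_of_nonneg_right (mul_nonneg hq (F.d_nonneg hn (F.mix_mem hm hn hp hq)))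
  · filter_upwards [Filter.eventually_ge_atTop 0] with q hq using F.cost_le_mul_d hm hn hp hq

lemma hasDerivAt_cost {m n p q : ℝ} (hm : m ∈ F.S) (hn : n ∈ F.S) (hp : 0 < p) (hq : 0 ≤ q) :
    HasDerivAt (F.cost m n p) (F.d n (mix m n p q)) q := by
  have h : 0 < p + q := by linarith
  have hx := F.mix_mem hm hn hp hq
  have hmix : DifferentiableAt ℝ (mix m n p) q := by
    unfold mix
    exact DifferentiableAt.fun_div (by fun_prop) (by fun_prop) h.ne'
  have hdm := (F.hasDerivAt_d m hx).comp q hmix.hasDerivAt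
  have hdn := (F.hasDerivAt_d n hx).comp q hmix.hasDerivAt
  refine ((hdm.const_mul p).add ((hasDerivAt_id q).mul hdn)).congr_deriv ?_
  simp only [id, Function.comp_apply]
  linear_combination (iteratedDeriv 2 F.b (F.θof (mix m n p q)))⁻¹ * deriv (mix m n p) q *
    mix_mul (m := m) (n := n) h

lemma existsUnique_cost_eq {m n p I : ℝ} (hm : m ∈ F.S) (hn : n ∈ F.S) (hmn : m ≠ n)
    (hI : 0 < I) (hp : I / F.d m n < p) : ∃! q : ℝ, 0 < q ∧ F.cost m n p q = I := by
  have hd := F.d_pos hm hn hmn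
  have hp0 : 0 < p := (div_pos hI hd).trans hp
  have hmono := F.strictMonoOn_cost hm hn hmn hp0
  obtain ⟨r, hr, hr0⟩ := (((F.tendsto_cost hm hn hp0).eventually_const_lt
    ((div_lt_iff₀ hd).1 hp)).and (Filter.eventually_ge_atTop 0)).exists
  have hcont : ContinuousOn (F.cost m n p) (Set.Icc 0 r) := fun q hq =>
    (F.hasDerivAt_cost hm hn hp0 hq.1).continuousAt.continuousWithinAt
  obtain ⟨q, hq, hqI⟩ := intermediate_value_Ioo hr0 hcont
    ⟨(F.cost_zero_right hp0).trans_lt hI, hr⟩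
  refine ⟨q, ⟨hq.1, hqI⟩, fun s hs => ?_⟩
  exact hmono.injOn hs.1.le hq.1.le (hs.2.trans hqI.symm)

lemma strictAntiOn_of_cost_eq {m n I : ℝ} {s : Set ℝ} {f : ℝ → ℝ} (hm : m ∈ F.S) (hn : n ∈ F.S)
    (hmn : m ≠ n) (hs : ∀ p ∈ s, 0 < p) (hf : ∀ p ∈ s, 0 < f p ∧ F.cost m n p (f p) = I) :
    StrictAntiOn f s := by
  intro p hp r hr hpr
  by_contra! hle
  have h1 : F.cost m n p (f p) ≤ F.cost m n p (f r) :=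
    (F.strictMonoOn_cost hm hn hmn (hs p hp)).monotoneOn (hf p hp).1.le (hf r hr).1.le hle
  have h2 : F.cost m n p (f r) < F.cost m n r (f r) := by
    rw [F.cost_comm m n p, F.cost_comm m n r]
    exact F.strictMonoOn_cost hn hm hmn.symm (hf r hr).1 (hs p hp).le (hs r hr).le hpr
  linarith [(hf p hp).2, (hf r hr).2]

lemma tendsto_of_cost_eq {m n I : ℝ} {f : ℝ → ℝ} (hm : m ∈ F.S) (hn : n ∈ F.S)
    (hmn : m ≠ n) (hI : 0 < I)
    (hf : ∀ᶠ p in Filter.atTop, 0 < f p ∧ F.cost m n p (f p) = I) :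
    Filter.Tendsto f Filter.atTop (nhds (I / F.d n m)) := by
  have hd := F.d_pos hn hm hmn.symm
  refine tendsto_order.2 ⟨fun c hc => ?_, fun c hc => ?_⟩
  · filter_upwards [hf, Filter.eventually_gt_atTop 0] with p hp hp0
    refine hc.trans_le ((div_le_iff₀ hd).2 ?_)
    rw [← hp.2, F.cost_comm]
    exact F.cost_le_mul_d hn hm hp.1 hp0.le
  · have hc0 : 0 < c := (div_pos hI hd).trans hc
    filter_upwards [hf, Filter.eventually_gt_atTop 0,
      (F.tendsto_cost hn hm hc0).eventually_const_lt ((div_lt_iff₀ hd).1 hc)] with p hp hp0 hlt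
    rw [F.cost_comm, ← hp.2] at hlt
    exact ((F.strictMonoOn_cost hm hn hmn hp0).lt_iff_lt hp.1.le hc0.le).1 hlt

end SPEF

/-- monotonicity, limits and derivative of `N_a ↦ W_a(N₁, N_a)`, and
the induced decreasing map `N₁ ↦ N_a(N₁)` solving `W_a(N₁, N_a(N₁)) = I`. -/
theorem statement_2 {K : ℕ} [NeZero K] (M : Bandit K) (a : Fin K) (ha : a ∈ alt K) :
    (∀ N1 : ℝ, 0 < N1 →
      StrictMonoOn (fun Na => M.W a N1 Na) (Set.Ici 0) ∧
      M.W a N1 0 = 0 ∧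
      Filter.Tendsto (fun Na => M.W a N1 Na) Filter.atTop
        (nhds (N1 * M.d (M.μ 0) (M.μ a))) ∧
      (∀ Na : ℝ, 0 ≤ Na →
        HasDerivAt (fun t => M.W a N1 t) (M.d (M.μ a) (M.x1 a N1 Na)) Na)) ∧
    (∀ I : ℝ, 0 < I →
      (∀ N1 : ℝ, I / M.d (M.μ 0) (M.μ a) < N1 →
        ∃! Na : ℝ, 0 < Na ∧ M.W a N1 Na = I) ∧
      (∀ Nfun : ℝ → ℝ,
        (∀ N1 ∈ Set.Ioi (I / M.d (M.μ 0) (M.μ a)), 0 < Nfun N1 ∧ M.W a N1 (Nfun N1) = I) →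
        StrictAntiOn Nfun (Set.Ioi (I / M.d (M.μ 0) (M.μ a))) ∧
        Filter.Tendsto Nfun Filter.atTop (nhds (I / M.d (M.μ a) (M.μ 0))))) := by
  have hne : M.μ 0 ≠ M.μ a := (M.μ_best a (Finset.mem_filter.1 ha).2).ne'
  have h0 := M.μ_mem 0
  have h1 := M.μ_mem a
  refine ⟨fun N1 hN1 => ⟨M.strictMonoOn_cost h0 h1 hne hN1, M.cost_zero_right hN1,
    M.tendsto_cost h0 h1 hN1, fun Na hNa => M.hasDerivAt_cost h0 h1 hN1 hNa⟩, fun I hI =>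
    ⟨fun N1 hN1 => M.existsUnique_cost_eq h0 h1 hne hI hN1, fun Nfun hN => ⟨?_, ?_⟩⟩⟩
  · exact M.strictAntiOn_of_cost_eq h0 h1 hne
      (fun p hp => (div_pos hI (M.d_pos h0 h1 hne)).trans hp) hN
  · exact M.tendsto_of_cost_eq h0 h1 hne hI ((Filter.eventually_gt_atTop _).mono hN)
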